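/- Let n ≥ 2 and 1 ≤ ξ ≤ d be integers and let λ ∈ ℂ^{n−1} be nonzero. Consider the finite-dimensional ℂ-vector space W of all tuples (q_{j,α}), indexed by pairs (j,α) with ξ ≤ j ≤ d and 0 ≤ α ≤ j, where q_{j,α} ∈ ℂ[z_2, …, z_n] is homogeneous of degree α (a constant when α = 0). For 0 ≤ e ≤ d define Φ_e = ∑_{α=0}^{e} u_1^{e−α} ∑_{j=max(ξ,e)}^{d} binom(j−α, e−α) q_{j,α} ∈ ℂ[u_1, z_2, …, z_n]. Then the set of tuples in W such that Φ_e(t, s·λ) = 0 for all t, s ∈ ℂ and all 0 ≤ e ≤ d is a linear subspace of W of codimension (1/2)·[(d+1)(d+2) − ξ(ξ+1)]. -/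

import Mathlib

open MvPolynomial

/-- The index set of the pairs `(j,α)` with `ξ ≤ j ≤ d`, `0 ≤ α ≤ j`. -/
abbrev IdxSet (ξ d : ℕ) : Type :=
  {p : ℕ × ℕ // ξ ≤ p.1 ∧ p.1 ≤ d ∧ p.2 ≤ p.1}

/-- The space `W` of tuples `(q_{j,α})`, `ξ ≤ j ≤ d`, `0 ≤ α ≤ j`, where
`q_{j,α} ∈ ℂ[z_2,…,z_n]` is homogeneous of degree `α` (variables indexed by
`{i : Fin n // i ≠ 0}`). -/
abbrev TupleSpace (n ξ d : ℕ) [NeZero n] : Type :=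
  Π p : IdxSet ξ d,
    homogeneousSubmodule {i : Fin n // i ≠ 0} ℂ p.1.2

/-- The polynomial `Φ_e = ∑_{α=0}^e u_1^{e-α} ∑_{j=max(ξ,e)}^d C(j-α,e-α) q_{j,α}`
associated to a tuple `q ∈ W` (here `u_1 = X 0`). -/
noncomputable def PhiPoly (n ξ d : ℕ) [NeZero n] (q : TupleSpace n ξ d) (e : ℕ) :
    MvPolynomial (Fin n) ℂ :=
  ∑ α ∈ Finset.range (e + 1), (X (0 : Fin n)) ^ (e - α) *
    ∑ j ∈ Finset.Icc (max ξ e) d,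
      C (((j - α).choose (e - α) : ℂ)) *
        rename Subtype.val
          (if h : ξ ≤ j ∧ j ≤ d ∧ α ≤ j then
            ((q ⟨(j, α), h⟩ : homogeneousSubmodule {i : Fin n // i ≠ 0} ℂ α) :
              MvPolynomial {i : Fin n // i ≠ 0} ℂ)
          else 0)

/-!
On the point `(t, sλ)` the homogeneity of `q_{j,α}` turns the vanishing of `Φ_e` into a polynomial
identity in `t` and `s` whose coefficients are the sums `∑_j binom(j-α, e-α) q_{j,α}(λ)`. For fixed
`α` these sums form a unitriangular system in the unknowns `q_{j,α}(λ)`, so all `Φ_e` vanish on the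
line exactly when all values `q_{j,α}(λ)` do. Since `λ ≠ 0`, a form of any degree can be given any
value at `λ`; hence these conditions are independent, and the codimension is the number of pairs
`(j,α)`.
-/

lemma eq_zero_of_sum_Icc_mul_eq_zero {ι R : Type*} [PartialOrder ι] [LocallyFiniteOrder ι]
    [NonUnitalNonAssocSemiring R] [NoZeroDivisors R] {m d : ι} {a : ι → ι → R} {c : ι → R}
    (ha : ∀ e ∈ Finset.Icc m d, a e e ≠ 0)
    (h : ∀ e ∈ Finset.Icc m d, ∑ j ∈ Finset.Icc e d, a e j * c j = 0) :
    ∀ j ∈ Finset.Icc m d, c j = 0 := by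
  intro j hj
  induction hk : (Finset.Icc j d).card using Nat.strong_induction_on generalizing j with
  | _ k ih =>
    subst hk
    obtain ⟨hmj, hjd⟩ := Finset.mem_Icc.1 hj
    have later_terms : ∀ i ∈ Finset.Icc j d, i ≠ j → a j i * c i = 0 := by
      intro i hi hij
      obtain ⟨hji, hid⟩ := Finset.mem_Icc.1 hi
      have hlt : (Finset.Icc i d).card < (Finset.Icc j d).card :=
        Finset.card_lt_card (Finset.Icc_ssubset_Icc_left hjd (hji.lt_of_ne' hij) le_rfl)
      rw [ih _ hlt i (Finset.mem_Icc.2 ⟨hmj.trans hji, hid⟩) rfl, mul_zero]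
    have diagonal : a j j * c j = 0 := by
      rw [← h j hj, Finset.sum_eq_single_of_mem j (Finset.left_mem_Icc.2 hjd) later_terms]
    exact (mul_eq_zero.1 diagonal).resolve_left (ha j hj)

lemma eq_zero_of_forall_sum_range_pow_sub_mul_eq_zero {R : Type*} [CommRing R] [IsDomain R]
    [Infinite R] {e : ℕ} {a : ℕ → R}
    (h : ∀ t : R, ∑ α ∈ Finset.range (e + 1), t ^ (e - α) * a α = 0) {α : ℕ} (hα : α ≤ e) :
    a α = 0 := by
  let f : Fin (e + 1) → R := fun i ↦ Infinite.natEmbedding R i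
  have hf : Function.Injective f := (Infinite.natEmbedding R).injective.comp Fin.val_injective
  have reversed : (fun i : Fin (e + 1) ↦ a (e - i)) = 0 := by
    refine Matrix.eq_zero_of_forall_index_sum_pow_mul_eq_zero hf fun j ↦ ?_
    rw [Fin.sum_univ_eq_sum_range (fun i ↦ f j ^ i * a (e - i)), ← h (f j),
      ← Finset.sum_flip (fun i ↦ f j ^ i * a (e - i))]
    refine Finset.sum_congr rfl fun i hi ↦ ?_
    rw [Nat.sub_sub_self (Finset.mem_range_succ_iff.1 hi)]
  simpa only [Nat.sub_sub_self hα, Pi.zero_apply] using congrFun reversed ⟨e - α, by omega⟩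

lemma forall_sum_pow_mul_sum_choose_mul_eq_zero_iff {R : Type*} [CommRing R] [IsDomain R]
    [Infinite R] {ξ d : ℕ} {c : ℕ → ℕ → R} :
    (∀ t s : R, ∀ e ≤ d, ∑ α ∈ Finset.range (e + 1), t ^ (e - α) *
        ∑ j ∈ Finset.Icc (max ξ e) d, ((j - α).choose (e - α) : R) * (s ^ α * c j α) = 0) ↔
      ∀ j α, ξ ≤ j → j ≤ d → α ≤ j → c j α = 0 := by
  constructor
  · intro h j α hξj hjd hαj
    have triangular : ∀ e ∈ Finset.Icc (max ξ α) d,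
        ∑ i ∈ Finset.Icc e d, ((i - α).choose (e - α) : R) * c i α = 0 := by
      intro e he
      obtain ⟨⟨hξe, hαe⟩, hed⟩ : (ξ ≤ e ∧ α ≤ e) ∧ e ≤ d := by simpa using he
      have := eq_zero_of_forall_sum_range_pow_sub_mul_eq_zero (fun t ↦ h t 1 e hed) hαe
      simpa only [max_eq_right hξe, one_pow, one_mul] using this
    exact eq_zero_of_sum_Icc_mul_eq_zero (by simp) triangular j
      (Finset.mem_Icc.2 ⟨max_le hξj hαj, hjd⟩)
  · intro h t s e _
    refine Finset.sum_eq_zero fun α hα ↦ ?_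
    rw [Finset.sum_eq_zero, mul_zero]
    intro j hj
    obtain ⟨⟨hξj, hej⟩, hjd⟩ : (ξ ≤ j ∧ e ≤ j) ∧ j ≤ d := by simpa using hj
    rw [h j α hξj hjd ((Finset.mem_range_succ_iff.1 hα).trans hej), mul_zero, mul_zero]

lemma eval_smul_of_isHomogeneous {σ R : Type*} [CommSemiring R] {p : MvPolynomial σ R} {k : ℕ}
    (hp : p.IsHomogeneous k) (s : R) (x : σ → R) : eval (s • x) p = s ^ k * eval x p := by
  rw [eval_eq, eval_eq, Finset.mul_sum]
  refine Finset.sum_congr rfl fun m hm ↦ ?_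
  simp only [Pi.smul_apply, smul_eq_mul, mul_pow, Finset.prod_mul_distrib,
    Finset.prod_pow_eq_pow_sum, ← hp.degree_eq_sum_deg_support hm]
  exact mul_left_comm _ _ _

lemma exists_isHomogeneous_eval_eq {σ K : Type*} [Field K] {x : σ → K} (hx : x ≠ 0) (k : ℕ)
    (c : K) : ∃ p : MvPolynomial σ K, p.IsHomogeneous k ∧ eval x p = c := by
  obtain ⟨i, hi⟩ := Function.ne_iff.1 hx
  refine ⟨C (c / x i ^ k) * X i ^ k, isHomogeneous_C_mul_X_pow _ _ _, ?_⟩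
  rw [map_mul, eval_C, map_pow, eval_X, div_mul_cancel₀ c (pow_ne_zero k hi)]

/-- Evaluation at the point `x` of every member of a family of forms of degrees `deg i`. -/
noncomputable def evalForms {ι σ R : Type*} [CommSemiring R] (deg : ι → ℕ) (x : σ → R) :
    (Π i, homogeneousSubmodule σ R (deg i)) →ₗ[R] ι → R :=
  LinearMap.piMap fun i ↦ (aeval x).toLinearMap ∘ₗ (homogeneousSubmodule σ R (deg i)).subtype

lemma evalForms_apply {ι σ R : Type*} [CommSemiring R] (deg : ι → ℕ) (x : σ → R)
    (q : Π i, homogeneousSubmodule σ R (deg i)) (i : ι) :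
    evalForms deg x q i = eval x (q i : MvPolynomial σ R) := rfl

lemma evalForms_surjective {ι σ K : Type*} [Field K] (deg : ι → ℕ) {x : σ → K} (hx : x ≠ 0) :
    Function.Surjective (evalForms deg x) := by
  intro c
  choose p hp hpc using fun i ↦ exists_isHomogeneous_eval_eq hx (deg i) (c i)
  exact ⟨fun i ↦ ⟨p i, hp i⟩, funext hpc⟩

lemma finrank_quotient_ker_evalForms {ι σ K : Type*} [Fintype ι] [Field K] (deg : ι → ℕ)
    {x : σ → K} (hx : x ≠ 0) :
    Module.finrank K ((Π i, homogeneousSubmodule σ K (deg i)) ⧸ LinearMap.ker (evalForms deg x)) =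
      Fintype.card ι := by
  rw [((evalForms deg x).quotKerEquivOfSurjective (evalForms_surjective deg hx)).finrank_eq,
    Module.finrank_fintype_fun_eq_card]

instance (ξ d : ℕ) : Fintype (IdxSet ξ d) :=
  Fintype.subtype (((Finset.Icc ξ d).sigma fun j ↦ Finset.range (j + 1)).map
    (Equiv.sigmaEquivProd ℕ ℕ).toEmbedding) (by simp [and_assoc])

lemma two_mul_sum_Icc_add_one {ξ d : ℕ} (h : ξ ≤ d) :
    2 * ∑ j ∈ Finset.Icc ξ d, (j + 1) + ξ * (ξ + 1) = (d + 1) * (d + 2) := by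
  induction d, h using Nat.le_induction with
  | base => rw [Finset.Icc_self, Finset.sum_singleton]; ring
  | succ d h ih => rw [Finset.sum_Icc_succ_top (by omega)]; linarith

lemma card_idxSet {ξ d : ℕ} (h : ξ ≤ d) :
    Fintype.card (IdxSet ξ d) = ((d + 1) * (d + 2) - ξ * (ξ + 1)) / 2 := by
  have card_eq_sum : Fintype.card (IdxSet ξ d) = ∑ j ∈ Finset.Icc ξ d, (j + 1) := by
    simp only [Fintype.subtype_card, Finset.card_map, Finset.card_sigma, Finset.card_range]
  have := two_mul_sum_Icc_add_one h
  omega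

/-- The entry `q_{j,α}` of a tuple of forms, with the value `0` at pairs outside `IdxSet ξ d`. -/
noncomputable def tupleEntry {σ R : Type*} [CommSemiring R] {ξ d : ℕ}
    (q : Π p : IdxSet ξ d, homogeneousSubmodule σ R p.1.2) (j α : ℕ) : MvPolynomial σ R :=
  if h : ξ ≤ j ∧ j ≤ d ∧ α ≤ j then (q ⟨(j, α), h⟩ : MvPolynomial σ R) else 0

lemma tupleEntry_isHomogeneous {σ R : Type*} [CommSemiring R] {ξ d : ℕ}
    (q : Π p : IdxSet ξ d, homogeneousSubmodule σ R p.1.2) (j α : ℕ) :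
    (tupleEntry q j α).IsHomogeneous α := by
  unfold tupleEntry
  split_ifs with h
  · exact (q ⟨(j, α), h⟩).2
  · exact isHomogeneous_zero σ R α

lemma mem_ker_evalForms_iff_tupleEntry {σ R : Type*} [CommSemiring R] {ξ d : ℕ} {x : σ → R}
    {q : Π p : IdxSet ξ d, homogeneousSubmodule σ R p.1.2} :
    q ∈ LinearMap.ker (evalForms (fun p : IdxSet ξ d ↦ p.1.2) x) ↔
      ∀ j α, ξ ≤ j → j ≤ d → α ≤ j → eval x (tupleEntry q j α) = 0 := by
  rw [LinearMap.mem_ker, funext_iff]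
  constructor
  · intro hq j α hξj hjd hαj
    rw [tupleEntry, dif_pos ⟨hξj, hjd, hαj⟩]
    exact hq ⟨(j, α), hξj, hjd, hαj⟩
  · rintro hq ⟨⟨j, α⟩, h⟩
    simpa only [evalForms_apply, Pi.zero_apply, tupleEntry, dif_pos h] using hq j α h.1 h.2.1 h.2.2

lemma eval_phiPoly {n ξ d : ℕ} [NeZero n] (q : TupleSpace n ξ d) (e : ℕ)
    (lam : {i : Fin n // i ≠ 0} → ℂ) (t s : ℂ) :
    eval (fun i : Fin n ↦ if h : i = 0 then t else s * lam ⟨i, h⟩) (PhiPoly n ξ d q e) =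
      ∑ α ∈ Finset.range (e + 1), t ^ (e - α) * ∑ j ∈ Finset.Icc (max ξ e) d,
        ((j - α).choose (e - α) : ℂ) * eval (s • lam) (tupleEntry q j α) := by
  have restrict : (fun i : Fin n ↦ if h : i = 0 then t else s * lam ⟨i, h⟩) ∘ Subtype.val =
      s • lam := funext fun i ↦ dif_neg i.2
  simp only [PhiPoly, map_sum, map_mul, map_pow, eval_X, eval_C, eval_rename, restrict, dite_true,
    tupleEntry]

/-- For each `e`, the sum is the value of `Φ_e` at `u_1 = t` and `(z_2,…,z_n) = s • x`. -/
theorem stmt_12_general {σ K : Type*} [Field K] [Infinite K] {ξ d : ℕ} (hξd : ξ ≤ d)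
    {x : σ → K} (hx : x ≠ 0) :
    ∃ S : Submodule K (Π p : IdxSet ξ d, homogeneousSubmodule σ K p.1.2),
      (∀ q, q ∈ S ↔ ∀ t s : K, ∀ e ≤ d,
        ∑ α ∈ Finset.range (e + 1), t ^ (e - α) * ∑ j ∈ Finset.Icc (max ξ e) d,
          ((j - α).choose (e - α) : K) * eval (s • x) (tupleEntry q j α) = 0) ∧
      Module.finrank K ((Π p : IdxSet ξ d, homogeneousSubmodule σ K p.1.2) ⧸ S) =
        ((d + 1) * (d + 2) - ξ * (ξ + 1)) / 2 := by
  refine ⟨LinearMap.ker (evalForms (fun p : IdxSet ξ d ↦ p.1.2) x), fun q ↦ ?_, ?_⟩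
  · simp only [eval_smul_of_isHomogeneous (tupleEntry_isHomogeneous q _ _)]
    rw [mem_ker_evalForms_iff_tupleEntry, forall_sum_pow_mul_sum_choose_mul_eq_zero_iff]
  · rw [finrank_quotient_ker_evalForms _ hx, card_idxSet hξd]

/-- The codimension count used in the proof of Lemma 2.3 of the paper:
for `n ≥ 2`, `1 ≤ ξ ≤ d` and a nonzero `λ ∈ ℂ^{n-1}`, the set of tuples
`(q_{j,α}) ∈ W` such that every `Φ_e`, `0 ≤ e ≤ d`, vanishes identically on the
line through `(1,0)` and `(0,λ)` is a linear subspace of `W` of codimension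
`((d+1)(d+2) - ξ(ξ+1))/2`. -/
theorem stmt_12 (n : ℕ) [NeZero n] (hn : 2 ≤ n) (ξ d : ℕ) (hξ : 1 ≤ ξ) (hξd : ξ ≤ d)
    (lam : {i : Fin n // i ≠ 0} → ℂ) (hlam : lam ≠ 0) :
    ∃ S : Submodule ℂ (TupleSpace n ξ d),
      (∀ q : TupleSpace n ξ d,
        q ∈ S ↔ ∀ t s : ℂ, ∀ e : ℕ, e ≤ d →
          eval (fun i : Fin n => if h : i = 0 then t else s * lam ⟨i, h⟩)
            (PhiPoly n ξ d q e) = 0) ∧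
      Module.finrank ℂ (TupleSpace n ξ d ⧸ S) =
        ((d + 1) * (d + 2) - ξ * (ξ + 1)) / 2 := by
  simpa only [eval_phiPoly] using stmt_12_general hξd hlam
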